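/- arXiv:1201.4032 — 11 statements merged into one kernel-verified Lean document; each statement's English description precedes it below -/
import Mathlib

section
/- (Lemma 2.1) Let n ≥ 1 be a natural number and c ≥ 0. The function φ : ℝ → ℝ given by φ(x) = c·(x₊)ⁿ is n-Jensen-convex. -/
/-!
Up to normalisation, `Δ_h^{n+1} (x₊)ⁿ` is the uniform B-spline of degree `n`, and the proof is the
Cox–de Boor recursion. For any `g`, the Leibniz rule for differences (`fwdDiff_iter_id_mul`) gives
`Δ^{m+1}(x·g)(x) = (x + (m+1)h) Δ^m g(x+h) - x Δ^m g(x)`. Taking `g = (x₊)ⁿ`, so that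
`x·g = (x₊)^{n+1}` for `n ≥ 1`, and writing `Gₙ = Δ^{n+1} (x₊)ⁿ`, this becomes
`G_{n+1}(x) = (x + (n+2)h) Gₙ(x+h) - x Gₙ(x)`.
By induction `Gₙ` is nonnegative and vanishes outside `(-(n+1)h, 0)`; the support condition makes
both summands on the right nonnegative. The induction starts at `n = 1`, a hat function.
-/

open Finset

noncomputable section

/-- Iterated forward difference `Δ_{h₁…h_m} f(x) = ∑_{S⊆{1,…,m}} (−1)^{m−|S|} f(x + ∑_{i∈S} hᵢ)`. -/
def fwdDiffIter (m : ℕ) (h : Fin m → ℝ) (f : ℝ → ℝ) (x : ℝ) : ℝ :=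
  ∑ S : Finset (Fin m), (-1 : ℝ) ^ (m - S.card) * f (x + ∑ i ∈ S, h i)

/-- Equal-increment forward difference `Δ_h^m f(x) = ∑_{i=0}^m (−1)^{m−i} C(m,i) f(x + i·h)`. -/
def fwdDiffEq (m : ℕ) (h : ℝ) (f : ℝ → ℝ) (x : ℝ) : ℝ :=
  ∑ i ∈ Finset.range (m + 1), (-1 : ℝ) ^ (m - i) * (m.choose i : ℝ) * f (x + (i : ℝ) * h)

/-- `f` is `n`-Jensen-convex if `Δ_h^{n+1} f(x) ≥ 0` for all `x` and all `h > 0`. -/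
def JensenConvexOrder (n : ℕ) (f : ℝ → ℝ) : Prop :=
  ∀ x : ℝ, ∀ h : ℝ, 0 < h → 0 ≤ fwdDiffEq (n + 1) h f x

/-- `f` is `n`-Wright-convex if `Δ_{h₁…h_{n+1}} f(x) ≥ 0` for all `x` and all positive increments. -/
def WrightConvexOrder (n : ℕ) (f : ℝ → ℝ) : Prop :=
  ∀ x : ℝ, ∀ h : Fin (n + 1) → ℝ, (∀ i, 0 < h i) → 0 ≤ fwdDiffIter (n + 1) h f x

theorem fwdDiffEq_eq_iterate (m : ℕ) (h : ℝ) (f : ℝ → ℝ) (x : ℝ) :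
    fwdDiffEq m h f x = (fwdDiff h)^[m] f x := by
  rw [fwdDiff_iter_eq_sum_shift, fwdDiffEq]
  refine Finset.sum_congr rfl fun i _ => ?_
  simp

/-- The Leibniz rule for iterated differences of `x * g x`, with `Δ^{m+1} g` expanded in terms of
`Δ^m g`. -/
theorem fwdDiff_iter_id_mul (h : ℝ) (g : ℝ → ℝ) (m : ℕ) (x : ℝ) :
    (fwdDiff h)^[m + 1] (fun y => y * g y) x =
      (x + (m + 1) * h) * (fwdDiff h)^[m] g (x + h) - x * (fwdDiff h)^[m] g x := by
  induction m generalizing x with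
  | zero => simp [fwdDiff]
  | succ m ih =>
    rw [Function.iterate_succ_apply', fwdDiff, ih, ih, Function.iterate_succ_apply' _ m g]
    simp only [fwdDiff]
    push_cast
    ring

/-- Nonnegativity and support of the uniform B-spline of degree `n + 1`; the two support claims are
what keeps the induction going. -/
theorem fwdDiff_iter_posPart_pow (h : ℝ) (hh : 0 < h) (n : ℕ) (x : ℝ) :
    0 ≤ (fwdDiff h)^[n + 2] (fun y : ℝ => max y 0 ^ (n + 1)) x ∧
    (0 ≤ x → (fwdDiff h)^[n + 2] (fun y : ℝ => max y 0 ^ (n + 1)) x = 0) ∧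
    (x + (n + 2) * h ≤ 0 → (fwdDiff h)^[n + 2] (fun y : ℝ => max y 0 ^ (n + 1)) x = 0) := by
  induction n generalizing x with
  | zero =>
    simp only [Function.iterate_succ_apply', Function.iterate_zero, id, fwdDiff, zero_add, pow_one,
      Nat.cast_zero]
    refine ⟨?_, fun hx => ?_, fun hx => ?_⟩
    · rcases le_total 0 (x + h) with h1 | h1
      · rw [max_eq_left h1]
        linarith [le_max_left (x + h + h) 0, le_max_left x 0]
      · rw [max_eq_right h1]
        linarith [le_max_right (x + h + h) 0, le_max_right x 0]
    · rw [max_eq_left (by linarith : 0 ≤ x + h + h), max_eq_left (by linarith : 0 ≤ x + h),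
        max_eq_left hx]
      ring
    · rw [max_eq_right (by linarith : x + h + h ≤ 0), max_eq_right (by linarith : x + h ≤ 0),
        max_eq_right (by linarith : x ≤ 0)]
      ring
  | succ n ih =>
    have hpow : (fun y : ℝ => max y 0 ^ (n + 1 + 1)) = fun y => y * max y 0 ^ (n + 1) := by
      funext y
      rcases le_total 0 y with hy | hy
      · rw [max_eq_left hy, pow_succ']
      · simp [max_eq_right hy]
    rw [hpow, show n + 1 + 2 = (n + 2) + 1 from rfl, fwdDiff_iter_id_mul]
    push_cast
    obtain ⟨a0, a1, a2⟩ := ih x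
    obtain ⟨b0, b1, b2⟩ := ih (x + h)
    refine ⟨?_, fun hx => ?_, fun hx => ?_⟩
    · have hA : 0 ≤ (x + (n + 2 + 1) * h) * (fwdDiff h)^[n + 2] (fun y : ℝ => max y 0 ^ (n + 1)) (x + h) := by
        rcases le_total 0 (x + (n + 2 + 1) * h) with hs | hs
        · exact mul_nonneg hs b0
        · rw [b2 (by linarith), mul_zero]
      have hB : x * (fwdDiff h)^[n + 2] (fun y : ℝ => max y 0 ^ (n + 1)) x ≤ 0 := by
        rcases le_total 0 x with hs | hs
        · rw [a1 hs, mul_zero]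
        · exact mul_nonpos_of_nonpos_of_nonneg hs a0
      linarith
    · rw [a1 hx, b1 (by linarith)]
      ring
    · rw [a2 (by linarith), b2 (by linarith)]
      ring

/-- Lemma 2.1: for `c ≥ 0`, the function `x ↦ c·(x₊)ⁿ` is `n`-Jensen-convex. -/
theorem posPart_pow_jensenConvex (n : ℕ) (hn : 1 ≤ n) (c : ℝ) (hc : 0 ≤ c) :
    JensenConvexOrder n (fun x : ℝ => c * (max x 0) ^ n) := by
  obtain ⟨k, rfl⟩ := Nat.exists_eq_add_of_le' hn
  intro x h hh
  have hsmul : (fun x : ℝ => c * (max x 0) ^ (k + 1)) = c • fun x : ℝ => (max x 0) ^ (k + 1) := rfl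
  rw [fwdDiffEq_eq_iterate, hsmul, fwdDiff_iter_const_smul]
  exact mul_nonneg hc (fwdDiff_iter_posPart_pow h hh k x).1
end
end

section
/- (Corollary 2.2) Let n be an odd natural number and let a : ℝ → ℝ be an additive function. Then the function f : ℝ → ℝ given by f(x) = (a(x))₊ⁿ is n-Jensen-convex. -/
/-!
Write `A = a x` and `B = a h`. Additivity turns the difference of `(a ·)₊ⁿ` at `x` with step `h` into
the difference of order `n + 1` of `t ↦ t₊ⁿ` at `A` with step `B`, where `B` may have any sign.

For `B ≥ 0` this is nonnegative by induction on `n ≥ 1` (`fwdDiff_posPart_pow_nonneg`): for `n = 1`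
it is the convexity of `t₊`, and since `(n + 1) t₊ⁿ` is the derivative of `t₊ⁿ⁺¹`, nonnegativity of
the `(n + 1)`-st differences of `t₊ⁿ` makes the `(n + 1)`-st differences of `t₊ⁿ⁺¹` monotone, hence
its `(n + 2)`-nd differences nonnegative. For `B < 0` reversing the order of summation replaces
`(A, B)` by `(A + (n + 1) B, -B)` at the cost of a factor `(-1)ⁿ⁺¹`, which is `1` because `n` is odd.
-/

open Finset

noncomputable section

lemma hasDerivAt_fwdDiff_iter (B : ℝ) (m : ℕ) {f f' : ℝ → ℝ}
    (hf : ∀ t, HasDerivAt f (f' t) t) (t : ℝ) :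
    HasDerivAt ((fwdDiff B)^[m] f) ((fwdDiff B)^[m] f' t) t := by
  induction m generalizing f f' with
  | zero => exact hf t
  | succ m ih =>
    rw [Function.iterate_succ_apply, Function.iterate_succ_apply]
    exact ih fun s => ((hf (s + B)).comp_add_const s B).sub (hf s)

lemma hasDerivAt_posPart_pow {n : ℕ} (hn : 1 ≤ n) (t : ℝ) :
    HasDerivAt (fun s : ℝ => (max s 0) ^ (n + 1)) (((n : ℝ) + 1) * (max t 0) ^ n) t := by
  have hpow : HasDerivAt (fun s : ℝ => s ^ (n + 1)) (((n : ℝ) + 1) * t ^ n) t := by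
    simpa using hasDerivAt_pow (n + 1) t
  rcases lt_trichotomy t 0 with ht | rfl | ht
  · rw [max_eq_right ht.le, zero_pow (by omega), mul_zero]
    refine (hasDerivAt_const t (0 : ℝ)).congr_of_eventuallyEq ?_
    filter_upwards [Iio_mem_nhds ht] with s hs
    rw [max_eq_right (le_of_lt hs), zero_pow (by omega)]
  · -- At the kink, `s₊ⁿ⁺¹` is dominated by `|sⁿ⁺¹|`, whose order of vanishing is at least two.
    simp only [max_self, zero_pow (show n ≠ 0 by omega), mul_zero] at hpow ⊢
    rw [hasDerivAt_iff_isLittleO] at hpow ⊢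
    refine Asymptotics.IsBigO.trans_isLittleO (Asymptotics.IsBigO.of_bound 1 ?_) hpow
    filter_upwards with s
    have h : |max s 0| ≤ |s| := by
      rcases le_total s 0 with h | h <;> simp [h]
    simpa [abs_pow] using pow_le_pow_left₀ (abs_nonneg _) h (n + 1)
  · rw [max_eq_left ht.le]
    refine hpow.congr_of_eventuallyEq ?_
    filter_upwards [Ioi_mem_nhds ht] with s hs
    rw [max_eq_left (le_of_lt hs)]

lemma fwdDiff_posPart_pow_nonneg {n : ℕ} (hn : 1 ≤ n) {B : ℝ} (hB : 0 ≤ B) (t : ℝ) :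
    0 ≤ (fwdDiff B)^[n + 1] (fun s : ℝ => (max s 0) ^ n) t := by
  induction n, hn using Nat.le_induction generalizing t with
  | base =>
    simp only [Function.iterate_succ_apply, Function.iterate_zero, id, fwdDiff, pow_one]
    have h₁ := le_max_left (t + B + B) 0
    have h₂ := le_max_right (t + B + B) 0
    rcases max_cases t 0 with h | h <;> rcases max_cases (t + B) 0 with h' | h' <;> linarith
  | succ n hn ih =>
    have hd := hasDerivAt_fwdDiff_iter B (n + 1) (hasDerivAt_posPart_pow hn)
    have hmono : Monotone ((fwdDiff B)^[n + 1] (fun s : ℝ => (max s 0) ^ (n + 1))) := by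
      refine monotone_of_hasDerivAt_nonneg hd fun s => ?_
      have := congrFun (fwdDiff_iter_const_smul B ((n : ℝ) + 1)
        (fun s : ℝ => (max s 0) ^ n) (n + 1)) s
      simp only [Pi.smul_def, smul_eq_mul] at this
      rw [this]
      exact mul_nonneg (by positivity) (ih s)
    rw [Function.iterate_succ_apply', fwdDiff, sub_nonneg]
    exact hmono (le_add_of_nonneg_right hB)

lemma fwdDiffEq_eq_iter (m : ℕ) (B : ℝ) (f : ℝ → ℝ) (A : ℝ) :
    fwdDiffEq m B f A = (fwdDiff B)^[m] f A := by
  rw [fwdDiff_iter_eq_sum_shift, fwdDiffEq]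
  simp [zsmul_eq_mul, nsmul_eq_mul]

lemma fwdDiffEq_reflect {m : ℕ} (hm : Even m) (B : ℝ) (f : ℝ → ℝ) (A : ℝ) :
    fwdDiffEq m B f A = fwdDiffEq m (-B) f (A + m * B) := by
  unfold fwdDiffEq
  rw [← Finset.sum_range_reflect]
  refine Finset.sum_congr rfl fun i hi => ?_
  have hi : i ≤ m := Nat.lt_succ_iff.mp (Finset.mem_range.mp hi)
  have hsign : (-1 : ℝ) ^ i = (-1) ^ (m - i) := by
    rcases Nat.even_or_odd i with h | h
    · rw [h.neg_one_pow, ((Nat.even_sub hi).mpr (iff_of_true hm h)).neg_one_pow]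
    · rw [h.neg_one_pow, (Nat.Even.sub_odd hi hm h).neg_one_pow]
  rw [show m + 1 - 1 - i = m - i by omega, Nat.sub_sub_self hi, Nat.choose_symm hi, hsign,
    Nat.cast_sub hi]
  congr 2
  ring

/-- Corollary 2.2: if `n` is odd and `a` is additive, then
`f(x) = (a(x))₊ⁿ` is `n`-Jensen-convex. -/
theorem additive_posPart_pow_jensenConvex (n : ℕ) (hn : Odd n) (a : ℝ → ℝ)
    (ha : ∀ x y : ℝ, a (x + y) = a x + a y) :
    JensenConvexOrder n (fun x : ℝ => (max (a x) 0) ^ n) := by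
  intro x h _
  have hmul (i : ℕ) : a (x + i * h) = a x + i * a h := by
    have := map_nsmul (AddMonoidHom.mk' a ha) i h
    simp only [AddMonoidHom.mk'_apply, nsmul_eq_mul] at this
    rw [ha, this]
  have key : fwdDiffEq (n + 1) h (fun x : ℝ => (max (a x) 0) ^ n) x
      = fwdDiffEq (n + 1) (a h) (fun t : ℝ => (max t 0) ^ n) (a x) := by
    simp only [fwdDiffEq, hmul]
  rw [key]
  rcases le_total 0 (a h) with hB | hB
  · rw [fwdDiffEq_eq_iter]
    exact fwdDiff_posPart_pow_nonneg hn.pos hB _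
  · rw [fwdDiffEq_reflect hn.add_one, fwdDiffEq_eq_iter]
    exact fwdDiff_posPart_pow_nonneg hn.pos (neg_nonneg.mpr hB) _
end
end

section
/- (Key computation in the proof of Theorem 2.3) Let n be an odd natural number, let h₁,…,h_{n+1} be distinct positive real numbers that are linearly independent over ℚ, and let a : ℝ → ℝ be an additive function with a(h₁) = −1 and a(h₂) = ⋯ = a(h_{n+1}) = 1. Then for f(x) = (a(x))₊ⁿ one has Δ_{h₁…h_{n+1}} f(0) = −1, i.e. ∑_{S ⊆ {1,…,n+1}} (−1)^{n+1−|S|} f(∑_{i∈S} h_i) = −1. -/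
/-!
Only `S = {0}` makes `a (∑ i ∈ S, h i)` negative, so `f` may be replaced by the polynomial-like
function `x ↦ (a x) ^ n` at the cost of one correction term, and the `(n+1)`-st difference of an
`n`-th power vanishes.

Concretely, the subsets of `Fin (n + 1)` are split according to whether they contain `0`. With
`k` the number of nonzero indices, the sets without `0` contribute
`-∑ k, (-1) ^ (n - k) * C(n, k) * k ^ n = -n!`, and those with `0` contribute
`∑ k, (-1) ^ (n - k) * C(n, k) * (k - 1)₊ ^ n`. As `n` is odd, this last sum exceeds
`∑ k, (-1) ^ (n - k) * C(n, k) * (k - 1) ^ n = n!` by `(-1) ^ n * (0 - (-1) ^ n) = -1`, the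
discrepancy at `k = 0`. Both evaluations to `n!` are `sum_alternating_choose_mul_pow`.
-/

open Finset

noncomputable section

/-- The `n`-th forward difference of `x ↦ x ^ n` with step `1` is `n!`, at every base point `y`. -/
lemma sum_alternating_choose_mul_pow (n : ℕ) (y : ℝ) :
    ∑ k ∈ range (n + 1), n.choose k • ((-1 : ℝ) ^ (n - k) * (y + k) ^ n) = n.factorial := by
  have h1 := fwdDiff_iter_eq_sum_shift (1 : ℝ) (fun r : ℝ => r ^ n) n y
  rw [fwdDiff_iter_eq_factorial] at h1
  simp only [Pi.natCast_apply] at h1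
  rw [h1]
  refine sum_congr rfl fun k _ => ?_
  simp only [zsmul_eq_mul, nsmul_eq_mul, mul_one]
  push_cast
  ring

/-- The positive part changes the sum with base point `-1` only in the term `k = 0`. -/
lemma sum_alternating_choose_mul_posPart_pow (n : ℕ) (hn : Odd n) :
    ∑ k ∈ range (n + 1), n.choose k • ((-1 : ℝ) ^ (n - k) * (max (-1 + (k : ℝ)) 0) ^ n)
      = n.factorial - 1 := by
  rw [← sum_alternating_choose_mul_pow n (-1), sum_range_succ', sum_range_succ' _ n]
  have hpos : ∀ k : ℕ, max (-1 + ((k + 1 : ℕ) : ℝ)) 0 = -1 + ((k + 1 : ℕ) : ℝ) := fun k =>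
    max_eq_left (by push_cast; linarith [(Nat.cast_nonneg k : (0 : ℝ) ≤ k)])
  simp only [hpos]
  simp [hn.neg_one_pow, hn.pos.ne']

/-- key computation in the proof of Theorem 2.3:
`Δ_{h₁…h_{n+1}} f(0) = −1` for `f(x) = (a(x))₊ⁿ`. -/
theorem key_difference_eq_neg_one (n : ℕ) (hn : Odd n) (h : Fin (n + 1) → ℝ)
    (hdist : Function.Injective h) (hpos : ∀ i, 0 < h i)
    (hli : LinearIndependent ℚ h)
    (a : ℝ → ℝ) (ha : ∀ x y : ℝ, a (x + y) = a x + a y)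
    (ha1 : a (h 0) = -1) (ha2 : ∀ i : Fin (n + 1), i ≠ 0 → a (h i) = 1) :
    fwdDiffIter (n + 1) h (fun x : ℝ => (max (a x) 0) ^ n) 0 = -1 := by
  have ha0 : a 0 = 0 := by simpa using ha 0 0
  let A : ℝ →+ ℝ := ⟨⟨a, ha0⟩, ha⟩
  have hsum : ∀ T : Finset (Fin (n + 1)), a (∑ i ∈ T, h i) = ∑ i ∈ T, a (h i) :=
    fun T => map_sum A h T
  have hT : ∀ T ∈ (univ.erase (0 : Fin (n + 1))).powerset,
      a (∑ i ∈ T, h i) = (#T : ℝ) := by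
    intro T hT
    rw [hsum, sum_congr rfl fun i hi => ha2 i (ne_of_mem_erase (mem_powerset.1 hT hi))]
    simp
  have h0T : ∀ T ∈ (univ.erase (0 : Fin (n + 1))).powerset, (0 : Fin (n + 1)) ∉ T :=
    fun T hT h0 => notMem_erase _ _ (mem_powerset.1 hT h0)
  have hcard : #(univ.erase (0 : Fin (n + 1))) = n := by simp
  unfold fwdDiffIter
  rw [← powerset_univ, ← insert_erase (mem_univ (0 : Fin (n + 1))),
    sum_powerset_insert (notMem_erase _ _)]
  -- Both halves depend on `T` only through its cardinality.
  have e1 : ∑ T ∈ (univ.erase (0 : Fin (n + 1))).powerset,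
      (-1 : ℝ) ^ (n + 1 - #T) * (max (a (0 + ∑ i ∈ T, h i)) 0) ^ n = -n.factorial := by
    rw [← sum_alternating_choose_mul_pow n 0, ← sum_neg_distrib]
    have := sum_powerset_apply_card (fun k : ℕ => -((-1 : ℝ) ^ (n - k) * (0 + (k : ℝ)) ^ n))
      (x := univ.erase (0 : Fin (n + 1)))
    rw [hcard] at this
    simp only [smul_neg] at this
    rw [← this]
    refine sum_congr rfl fun T hTm => ?_
    have hle : #T ≤ n := (card_le_card (mem_powerset.1 hTm)).trans hcard.le
    rw [zero_add, hT T hTm, max_eq_left (Nat.cast_nonneg _), Nat.succ_sub hle, pow_succ]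
    ring
  have e2 : ∑ T ∈ (univ.erase (0 : Fin (n + 1))).powerset,
      (-1 : ℝ) ^ (n + 1 - #(insert 0 T)) * (max (a (0 + ∑ i ∈ insert 0 T, h i)) 0) ^ n
        = n.factorial - 1 := by
    rw [← sum_alternating_choose_mul_posPart_pow n hn]
    have := sum_powerset_apply_card
      (fun k : ℕ => (-1 : ℝ) ^ (n - k) * (max (-1 + (k : ℝ)) 0) ^ n)
      (x := univ.erase (0 : Fin (n + 1)))
    rw [hcard] at this
    rw [← this]
    refine sum_congr rfl fun T hTm => ?_
    rw [zero_add, sum_insert (h0T T hTm), ha, ha1, hT T hTm, card_insert_of_notMem (h0T T hTm),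
      Nat.add_sub_add_right]
  rw [e1, e2]
  ring
end
end

section
/- (Corollary 2.4) For every odd natural number n, the class of n-Wright-convex functions ℝ → ℝ is properly contained in the class of n-Jensen-convex functions ℝ → ℝ: every n-Wright-convex function is n-Jensen-convex, and there exists an n-Jensen-convex function f : ℝ → ℝ that is not n-Wright-convex. -/
/-!
Grouping subsets by cardinality shows that `Δ_h^m` is the iterated difference with all increments
equal to `h`, which gives the inclusion.

For properness put `m = n + 1`, which is even, and take `f x = (a x) ^ m` for an additive
`a : ℝ → ℝ`. Polarization gives `Δ_{h₁…h_m} f(x) = m! * ∏ i, a (h i)`. With equal increments this is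
`m! * a(h) ^ m ≥ 0`, so `f` is `n`-Jensen-convex. A `ℚ`-linear `a` with `a 1 = 0` and `a √2 = 1`
satisfies `a (2 - √2) = -1`, so one increment `2 - √2` and `n` increments `√2`, all positive,
make the difference equal to `-m! < 0`.
-/

open Finset

noncomputable section

open Polynomial in
/-- One difference step: passing from `p` to `p(X) - p(X + r)` lowers the degree bound by one and
multiplies the top coefficient by `-(d + 1) r`. -/
lemma natDegree_sub_taylor_le_and_coeff (p : ℝ[X]) (d : ℕ) (hp : p.natDegree ≤ d + 1) (r : ℝ) :
    (p - taylor r p).natDegree ≤ d ∧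
      (p - taylor r p).coeff d = -((d + 1 : ℕ) : ℝ) * r * p.coeff (d + 1) := by
  constructor
  · rw [natDegree_le_iff_coeff_eq_zero]
    intro N hN
    have hdeg : (hasseDeriv N p).natDegree < 1 := by
      have := natDegree_hasseDeriv_le p N
      omega
    rw [coeff_sub, taylor_coeff, eval_eq_sum_range' hdeg]
    simp [hasseDeriv_coeff]
  · have hdeg : (hasseDeriv d p).natDegree < 2 := by
      have := natDegree_hasseDeriv_le p d
      omega
    rw [coeff_sub, taylor_coeff, eval_eq_sum_range' hdeg]
    simp [hasseDeriv_coeff, Finset.sum_range_succ, add_comm 1 d]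
    ring

open Polynomial in
/-- The alternating sum of a polynomial of degree at most `|s|` over all subset sums of `t` sees only
the coefficient of degree `|s|`. -/
lemma sum_powerset_neg_one_pow_mul_eval {ι : Type*} [DecidableEq ι] (t : ι → ℝ) (s : Finset ι) :
    ∀ (p : ℝ[X]) (y : ℝ), p.natDegree ≤ s.card →
      ∑ S ∈ s.powerset, (-1 : ℝ) ^ S.card * p.eval (y + ∑ i ∈ S, t i) =
        (-1) ^ s.card * (s.card.factorial : ℝ) * p.coeff s.card * ∏ i ∈ s, t i := by
  induction s using Finset.induction_on with
  | empty =>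
    intro p y hp
    rw [Finset.card_empty] at hp
    rw [eq_C_of_natDegree_le_zero hp]
    simp
  | insert a s ha ih =>
    intro p y hp
    rw [Finset.card_insert_of_notMem ha] at hp ⊢
    obtain ⟨hdeg, hcoeff⟩ := natDegree_sub_taylor_le_and_coeff p s.card hp (t a)
    have key := ih (p - taylor (t a) p) y hdeg
    rw [hcoeff] at key
    rw [Finset.sum_powerset_insert ha, Finset.prod_insert ha, ← Finset.sum_add_distrib]
    have hstep : ∀ S ∈ s.powerset,
        (-1 : ℝ) ^ S.card * p.eval (y + ∑ i ∈ S, t i) +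
          (-1 : ℝ) ^ (insert a S).card * p.eval (y + ∑ i ∈ insert a S, t i) =
        (-1 : ℝ) ^ S.card * (p - taylor (t a) p).eval (y + ∑ i ∈ S, t i) := by
      intro S hS
      have haS : a ∉ S := fun h => ha (Finset.mem_powerset.mp hS h)
      rw [Finset.card_insert_of_notMem haS, Finset.sum_insert haS, eval_sub, taylor_eval,
        show y + (t a + ∑ i ∈ S, t i) = y + ∑ i ∈ S, t i + t a by ring]
      ring
    rw [Finset.sum_congr rfl hstep, key, Nat.factorial_succ]
    push_cast
    ring

/-- Polarization: for additive `a` and even `m`, the iterated difference of `a ^ m`. -/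
lemma fwdDiffIter_additive_pow (m : ℕ) (hm : Even m) (a : ℝ →ₗ[ℚ] ℝ) (h : Fin m → ℝ) (x : ℝ) :
    fwdDiffIter m h (fun z => a z ^ m) x = (m.factorial : ℝ) * ∏ i, a (h i) := by
  have key := sum_powerset_neg_one_pow_mul_eval (fun i => a (h i)) (univ : Finset (Fin m))
    (Polynomial.X ^ m) (a x) (by simp)
  simp only [Finset.powerset_univ, Finset.card_univ, Fintype.card_fin, hm.neg_one_pow,
    Polynomial.coeff_X_pow_self, Polynomial.eval_pow, Polynomial.eval_X, one_mul, mul_one] at key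
  rw [← key, fwdDiffIter]
  refine Finset.sum_congr rfl fun S _ => ?_
  have hS : S.card ≤ m := by simpa using Finset.card_le_univ S
  have hsign : (-1 : ℝ) ^ (m - S.card) = (-1) ^ S.card := by
    rcases Nat.even_or_odd S.card with hE | hO
    · rw [hE.neg_one_pow, (hm.tsub hE).neg_one_pow]
    · rw [hO.neg_one_pow, (Nat.Even.sub_odd hS hm hO).neg_one_pow]
  rw [hsign, map_add, map_sum]

lemma fwdDiffIter_const (m : ℕ) (h : ℝ) (f : ℝ → ℝ) (x : ℝ) :
    fwdDiffIter m (fun _ => h) f x = fwdDiffEq m h f x := by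
  have key := Finset.sum_powerset_apply_card
    (fun j => (-1 : ℝ) ^ (m - j) * f (x + (j : ℝ) * h)) (x := (univ : Finset (Fin m)))
  simp only [Finset.powerset_univ, Finset.card_univ, Fintype.card_fin, nsmul_eq_mul] at key
  simp only [fwdDiffIter, fwdDiffEq, Finset.sum_const, nsmul_eq_mul]
  rw [key]
  exact Finset.sum_congr rfl fun j _ => by ring

lemma exists_additive_one_eq_zero_sqrt_two_eq_one :
    ∃ a : ℝ →ₗ[ℚ] ℝ, a 1 = 0 ∧ a (√2) = 1 := by
  have hnot : √2 ∉ Submodule.span ℚ {(1 : ℝ)} := by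
    rw [Submodule.mem_span_singleton]
    rintro ⟨q, hq⟩
    exact irrational_sqrt_two ⟨q, by rw [← hq, Rat.smul_def, mul_one]⟩
  obtain ⟨g, hg, hg0⟩ := Submodule.exists_le_ker_of_notMem hnot
  refine ⟨(g (√2))⁻¹ • (Algebra.linearMap ℚ ℝ ∘ₗ g), ?_, ?_⟩
  · have : g 1 = 0 := hg0 (Submodule.mem_span_singleton_self 1)
    simp [this]
  · simp [Rat.smul_def, hg]

/-- Corollary 2.4: for every odd `n`, the class of `n`-Wright-convex functions
is properly contained in the class of `n`-Jensen-convex functions. -/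
theorem wrightConvex_properly_contained_in_jensenConvex (n : ℕ) (hn : Odd n) :
    (∀ f : ℝ → ℝ, WrightConvexOrder n f → JensenConvexOrder n f) ∧
      ∃ f : ℝ → ℝ, JensenConvexOrder n f ∧ ¬ WrightConvexOrder n f := by
  have heven : Even (n + 1) := hn.add_one
  refine ⟨fun f hf x h hh => ?_, ?_⟩
  · rw [← fwdDiffIter_const]
    exact hf x _ fun _ => hh
  · obtain ⟨a, ha1, ha2⟩ := exists_additive_one_eq_zero_sqrt_two_eq_one
    refine ⟨fun z => a z ^ (n + 1), fun x h _ => ?_, fun hW => ?_⟩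
    · rw [← fwdDiffIter_const, fwdDiffIter_additive_pow _ heven, Finset.prod_const,
        Finset.card_univ, Fintype.card_fin]
      exact mul_nonneg (Nat.cast_nonneg _) (heven.pow_nonneg _)
    · have hlt : √2 < 2 := by
        rw [Real.sqrt_lt' (by norm_num)]
        norm_num
      have hneg : a (2 - √2) = -1 := by
        rw [show (2 : ℝ) - √2 = 1 + 1 - √2 by ring, map_sub, map_add, ha1, ha2]
        norm_num
      have hpos : ∀ i, 0 < (Fin.cons (2 - √2) (fun _ => √2) : Fin (n + 1) → ℝ) i := by
        intro i
        refine Fin.cases ?_ (fun j => ?_) i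
        · simp [hlt]
        · simp
      have h0 := hW 0 _ hpos
      rw [fwdDiffIter_additive_pow _ heven, Fin.prod_univ_succ] at h0
      simp only [Fin.cons_zero, Fin.cons_succ, hneg, ha2, Finset.prod_const_one, mul_one] at h0
      have : (0 : ℝ) < ((n + 1).factorial : ℝ) := by positivity
      linarith
end
end

section
/- (Section 3.1, case n = 3) Let h₁, h₂, h₃, h₄ be distinct positive real numbers that are linearly independent over ℚ, and let a : ℝ → ℝ be an additive function with a(h₁) = −1 and a(h₂) = a(h₃) = a(h₄) = 1. Then the function f(x) = (a(x))₊³ satisfies Δ_{h₁h₂h₃h₄} f(0) = −1; in particular f is 3-Jensen-convex but not 3-Wright-convex. -/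
/-!
Write `u = a x`, `v = a h`. By additivity, differences of `(a ·)₊³` at `x` become differences of the
convex-of-order-3 function `t ↦ t₊³` at `u` with increments `a hᵢ`, which may be negative. Equal
increments cause no harm, since a difference of even order is invariant under reversing the
progression `u, u + v, …, u + 4v`; the case `v ≥ 0` is a case distinction on the sign change in this
progression (`cube_pos_diff_nonneg`). Unequal increments of mixed sign have no such symmetry:
for values `-1, 1, 1, 1` the difference at `0` is an integer sum over the `16` subsets,
equal to `-1`.
-/

open Finset

noncomputable section

/-- The fourth equal-step difference of `t ↦ t₊³` is nonnegative for nonnegative step. -/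
lemma cube_pos_diff_nonneg_of_nonneg (u v : ℝ) (hv : 0 ≤ v) :
    0 ≤ (max u 0) ^ 3 - 4 * (max (u + v) 0) ^ 3 + 6 * (max (u + 2 * v) 0) ^ 3
      - 4 * (max (u + 3 * v) 0) ^ 3 + (max (u + 4 * v) 0) ^ 3 := by
  -- In the two middle cases the difference reduces to this expression.
  have key : ∀ p : ℝ, 0 ≤ p → p ≤ v → 0 ≤ (p + v) ^ 3 - 4 * p ^ 3 := by
    intro p hp hpv
    have h1 : (2 * p) ^ 3 ≤ (p + v) ^ 3 := by gcongr; linarith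
    have h2 : 0 ≤ p ^ 3 := by positivity
    nlinarith
  rcases le_total 0 u with h0 | h0
  · rw [max_eq_left h0, max_eq_left (by linarith), max_eq_left (by linarith),
      max_eq_left (by linarith), max_eq_left (by linarith)]
    apply le_of_eq; ring
  rw [max_eq_right h0]
  rcases le_total 0 (u + v) with h1 | h1
  · rw [max_eq_left h1, max_eq_left (by linarith), max_eq_left (by linarith),
      max_eq_left (by linarith)]
    have h2 : 0 ≤ (-u) ^ 3 := pow_nonneg (by linarith) 3
    linarith
  rw [max_eq_right h1]
  rcases le_total 0 (u + 2 * v) with h2 | h2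
  · rw [max_eq_left h2, max_eq_left (by linarith), max_eq_left (by linarith)]
    have := key (-(u + v)) (by linarith) (by linarith)
    linarith
  rw [max_eq_right h2]
  rcases le_total 0 (u + 3 * v) with h3 | h3
  · rw [max_eq_left h3, max_eq_left (by linarith)]
    have := key (u + 3 * v) (by linarith) (by linarith)
    linarith
  rw [max_eq_right h3]
  have : 0 ≤ (max (u + 4 * v) 0) ^ 3 := by positivity
  linarith

/-- The same for steps of either sign, by reversing the progression. -/
lemma cube_pos_diff_nonneg (u v : ℝ) :
    0 ≤ (max u 0) ^ 3 - 4 * (max (u + v) 0) ^ 3 + 6 * (max (u + 2 * v) 0) ^ 3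
      - 4 * (max (u + 3 * v) 0) ^ 3 + (max (u + 4 * v) 0) ^ 3 := by
  rcases le_total 0 v with hv | hv
  · exact cube_pos_diff_nonneg_of_nonneg u v hv
  · have := cube_pos_diff_nonneg_of_nonneg (u + 4 * v) (-v) (by linarith)
    rw [show u + 4 * v + -v = u + 3 * v by ring, show u + 4 * v + 2 * -v = u + 2 * v by ring,
      show u + 4 * v + 3 * -v = u + v by ring, show u + 4 * v + 4 * -v = u by ring] at this
    linarith

/-- Section 3.1, case `n = 3`: with distinct positive `ℚ`-linearly independent
`h₁, h₂, h₃, h₄` and additive `a` with `a(h₁) = −1`, `a(h₂) = a(h₃) = a(h₄) = 1`, the function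
`f(x) = (a(x))₊³` satisfies `Δ_{h₁h₂h₃h₄} f(0) = −1`; in particular `f` is 3-Jensen-convex but
not 3-Wright-convex. -/
theorem case_n_eq_three (h : Fin 4 → ℝ)
    (hdist : Function.Injective h) (hpos : ∀ i, 0 < h i)
    (hli : LinearIndependent ℚ h)
    (a : ℝ → ℝ) (ha : ∀ x y : ℝ, a (x + y) = a x + a y)
    (ha1 : a (h 0) = -1) (ha2 : a (h 1) = 1) (ha3 : a (h 2) = 1) (ha4 : a (h 3) = 1) :
    fwdDiffIter 4 h (fun x : ℝ => (max (a x) 0) ^ 3) 0 = -1 ∧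
      JensenConvexOrder 3 (fun x : ℝ => (max (a x) 0) ^ 3) ∧
      ¬ WrightConvexOrder 3 (fun x : ℝ => (max (a x) 0) ^ 3) := by
  have hdiff : fwdDiffIter 4 h (fun x : ℝ => (max (a x) 0) ^ 3) 0 = -1 := by
    let c : Fin 4 → ℤ := ![-1, 1, 1, 1]
    have hc : ∀ i, a (h i) = (c i : ℝ) := by
      intro i
      fin_cases i <;> simp [c, ha1, ha2, ha3, ha4]
    have hS : ∀ S : Finset (Fin 4), a (0 + ∑ i ∈ S, h i) = ((∑ i ∈ S, c i : ℤ) : ℝ) := by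
      intro S
      rw [zero_add, Int.cast_sum]
      simp only [← hc]
      exact map_sum (AddMonoidHom.mk' a ha) h S
    -- All values are integers, so the sum over subsets can be evaluated by computation.
    have hZ : ∑ S : Finset (Fin 4), (-1 : ℤ) ^ (4 - S.card) * (max (∑ i ∈ S, c i) 0) ^ 3 = -1 := by
      decide
    unfold fwdDiffIter
    simp only [hS]
    exact_mod_cast hZ
  refine ⟨hdiff, ?_, ?_⟩
  · intro x t _
    have hn : ∀ n : ℕ, a (x + n * t) = a x + n * a t := by
      intro n
      have := map_nsmul (AddMonoidHom.mk' a ha) n t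
      simp only [AddMonoidHom.mk'_apply, nsmul_eq_mul] at this
      rw [ha, this]
    have h4 := cube_pos_diff_nonneg (a x) (a t)
    have e : fwdDiffEq 4 t (fun x : ℝ => (max (a x) 0) ^ 3) x =
        (max (a x) 0) ^ 3 - 4 * (max (a x + a t) 0) ^ 3 + 6 * (max (a x + 2 * a t) 0) ^ 3
        - 4 * (max (a x + 3 * a t) 0) ^ 3 + (max (a x + 4 * a t) 0) ^ 3 := by
      unfold fwdDiffEq
      simp only [hn, Finset.sum_range_succ, Finset.sum_range_zero]
      norm_num [Nat.choose]
      ring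
    exact h4.trans_eq e.symm
  · intro hW
    have h0 : 0 ≤ fwdDiffIter 4 h (fun x : ℝ => (max (a x) 0) ^ 3) 0 := hW 0 h hpos
    linarith
end
end

section
/- (Section 3.2) There exists a function Q : ℝ → ℝ satisfying the quadratic functional equation Q(x+y) + Q(x−y) = 2Q(x) + 2Q(y) for all x, y ∈ ℝ such that the function f(x) = |Q(x)| is not 2-Jensen-convex, i.e. there exist x ∈ ℝ and h > 0 with Δ_h³ f(x) < 0. -/
/-!
Products of two additive functions solve the quadratic functional equation, so take
`Q t = t * a t` with `a : ℝ → ℝ` additive, `a 1 = 1` and `a √2 = -1`; such an `a` exists because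
`1` and `√2` are linearly independent over `ℚ`. Then `|Q (√2 + n)| = (√2 + n) * |n - 1|`, and the
third difference at `x = √2` with `h = 1` is `-√2 + 0 - 3 (√2 + 2) + 2 (√2 + 3) = -2 √2 < 0`.
-/

open Finset

noncomputable section

/-- Section 3.2: there is a solution `Q` of the quadratic functional equation
such that `f(x) = |Q(x)|` is not 2-Jensen-convex. -/
theorem exists_quadratic_abs_not_jensenConvex :
    ∃ Q : ℝ → ℝ, (∀ x y : ℝ, Q (x + y) + Q (x - y) = 2 * Q x + 2 * Q y) ∧
      ∃ x h : ℝ, 0 < h ∧ fwdDiffEq 3 h (fun t : ℝ => |Q t|) x < 0 := by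
  have hmem : √2 ∉ Submodule.span ℚ {(1 : ℝ)} := by
    rw [Submodule.mem_span_singleton]
    rintro ⟨q, hq⟩
    exact irrational_sqrt_two ⟨q, by simpa [Rat.smul_def] using hq⟩
  -- A `ℚ`-linear functional on `ℝ` that kills `ℚ` but not `√2`.
  obtain ⟨g, hg, hker⟩ := Submodule.exists_le_ker_of_notMem hmem
  have hg1 : g 1 = 0 := hker (Submodule.mem_span_singleton_self 1)
  have hg_cast : (g √2 : ℝ) ≠ 0 := by exact_mod_cast hg
  -- The constant `c` makes the additive map `t ↦ t + c * g t` take the value `-1` at `√2`.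
  obtain ⟨c, hc⟩ : ∃ c : ℝ, √2 + c * (g √2 : ℝ) = -1 :=
    ⟨-(1 + √2) / (g √2 : ℝ), by field_simp; ring⟩
  have hval : ∀ n : ℕ, (√2 + n * 1) + c * (g (√2 + n * 1) : ℝ) = n - 1 := by
    intro n
    have hn : g (n : ℝ) = 0 := by
      have h := g.map_smul (n : ℚ) 1
      simpa [Rat.smul_def, hg1] using h
    rw [mul_one, map_add, hn]
    push_cast
    linarith
  refine ⟨fun t => t * (t + c * (g t : ℝ)), ?_, √2, 1, one_pos, ?_⟩
  · intro x y
    simp only [map_add, map_sub]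
    push_cast
    ring
  · have h2 : 0 < √2 := by positivity
    have e : ∀ n : ℕ, |(√2 + n * 1) * ((√2 + n * 1) + c * (g (√2 + n * 1) : ℝ))|
        = (√2 + n) * |(n : ℝ) - 1| := by
      intro n
      rw [hval, abs_mul, mul_one, abs_of_pos (by positivity)]
    simp only [fwdDiffEq, e]
    norm_num [Finset.sum_range_succ, Nat.choose]
    linarith
end
end

section
/- (Proposition 3.1) If a : ℝ → ℝ is a discontinuous additive function, then the function f(x) = (a(x))₊² is not 2-Jensen-convex, i.e. there exist x ∈ ℝ and h > 0 with Δ_h³ f(x) < 0. -/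
/-!
If `a` were nonnegative on positive reals, it would be monotone, hence Borel measurable, hence (being
additive) continuous. So a discontinuous additive `a` has some `h > 0` with `a h < 0`. Started at
`x = -h`, the four points `-h, 0, h, 2h` have `a`-values `-a h > 0`, `0`, `a h < 0`, `2 * a h < 0`, so
only the first term of the third difference survives, and it equals `-(a h)² < 0`.
-/

open Finset

noncomputable section

lemma exists_pos_neg_of_not_continuous (a : ℝ → ℝ)
    (ha : ∀ x y : ℝ, a (x + y) = a x + a y) (hdisc : ¬ Continuous a) :
    ∃ h : ℝ, 0 < h ∧ a h < 0 := by
  by_contra! hnonneg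
  have hmono : Monotone a := by
    intro x y hxy
    rcases hxy.eq_or_lt with rfl | hlt
    · exact le_rfl
    · have h1 := hnonneg (y - x) (sub_pos.2 hlt)
      have h2 := ha x (y - x)
      rw [add_sub_cancel] at h2
      linarith
  exact hdisc (MeasureTheory.Measure.AddMonoidHom.continuous_of_measurable
    (AddMonoidHom.mk' a ha) hmono.measurable)

/-- Proposition 3.1: if `a` is a discontinuous additive function,
then `f(x) = (a(x))₊²` is not 2-Jensen-convex. -/
theorem discontinuous_additive_posPart_sq_not_jensenConvex (a : ℝ → ℝ)
    (ha : ∀ x y : ℝ, a (x + y) = a x + a y) (hdisc : ¬ Continuous a) :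
    ∃ x h : ℝ, 0 < h ∧ fwdDiffEq 3 h (fun t : ℝ => (max (a t) 0) ^ 2) x < 0 := by
  obtain ⟨h, hpos, hneg⟩ := exists_pos_neg_of_not_continuous a ha hdisc
  refine ⟨-h, h, hpos, ?_⟩
  have h0 : a 0 = 0 := by
    have := ha 0 0
    rw [add_zero] at this
    linarith
  have hm : a (-h) = -a h := by
    have := ha (-h) h
    rw [neg_add_cancel] at this
    linarith
  have e1 : -h + 1 * h = 0 := by ring
  have e2 : -h + 2 * h = h := by ring
  have e3 : -h + 3 * h = h + h := by ring
  have m0 : max (-a h) 0 = -a h := max_eq_left (by linarith)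
  have m2 : max (a h) 0 = 0 := max_eq_right hneg.le
  have m3 : max (a h + a h) 0 = 0 := max_eq_right (by linarith)
  have key : fwdDiffEq 3 h (fun t : ℝ => (max (a t) 0) ^ 2) (-h) = -(a h) ^ 2 := by
    simp only [fwdDiffEq, Finset.sum_range_succ, Finset.sum_range_zero, Nat.cast_zero,
      Nat.cast_one, Nat.cast_ofNat, zero_mul, add_zero, e1, e2, e3, h0, hm, ha h h, m0, m2, m3,
      max_self]
    norm_num
  rw [key]
  have := pow_pos (neg_pos.2 hneg) 2
  nlinarith
end
end

section
/- (Proposition 4.2, part 1) Let μ be a Borel measure on ℝ with μ((−∞, x)) < ∞ for every x ∈ ℝ, and let h > 0. Suppose τ_h μ ≤ μ, i.e. μ(B − h) ≤ μ(B) for every Borel set B. Then there exists a Borel measure ν on ℝ with ν((−∞, x)) < ∞ for every x ∈ ℝ such that μ = ν + τ_h μ and μ = 𝒥_h ν = ∑_{k∈ℕ} τ_{k·h} ν (a countable sum of measures). -/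
open MeasureTheory

/-!
Since `μ` is σ-finite and `τ_h μ ≤ μ`, Radon–Nikodym gives `τ_h μ = f μ` with `f ≤ 1` a.e., and
`ν = (1 - f) μ` satisfies `μ = ν + τ_h μ` (`exists_add_eq_of_le_of_sigmaFinite`). Iterating this
identity yields `μ = ∑_{k < n} τ_{kh} ν + τ_{nh} μ` (`eq_sum_range_translate_add`). On a set bounded
above by `b` the remainder is at most `μ (-∞, b - n h)`, which tends to `0` because `μ` is finite
on left half-lines; hence `μ` and `∑_k τ_{kh} ν` agree on all intervals `[a, b)`.
-/

/-- A σ-finite version of subtraction of measures; `Measure.sub_add_cancel_of_le` requires the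
smaller measure to be finite, which fails in the application. -/
lemma exists_add_eq_of_le_of_sigmaFinite {α : Type*} [MeasurableSpace α] {ρ μ : Measure α}
    [SigmaFinite μ] (hle : ρ ≤ μ) : ∃ ν : Measure α, μ = ν + ρ := by
  have : SigmaFinite ρ := Measure.sigmaFinite_of_le μ hle
  refine ⟨μ.withDensity (1 - ρ.rnDeriv μ), ?_⟩
  have hρ : μ.withDensity (ρ.rnDeriv μ) = ρ :=
    Measure.withDensity_rnDeriv_eq ρ μ (Measure.absolutelyContinuous_of_le hle)
  suffices hμ : μ = μ.withDensity (1 - ρ.rnDeriv μ) + μ.withDensity (ρ.rnDeriv μ) by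
    rwa [hρ] at hμ
  rw [← withDensity_add_right _ (Measure.measurable_rnDeriv ρ μ)]
  refine withDensity_one.symm.trans ?_
  refine withDensity_congr_ae ?_
  filter_upwards [Measure.rnDeriv_le_one_of_le hle] with x hx
  simp only [Pi.add_apply, Pi.sub_apply]
  exact (tsub_add_cancel_of_le hx).symm

lemma map_add_map_add (μ : Measure ℝ) (s t : ℝ) :
    Measure.map (· + t) (Measure.map (· + s) μ) = Measure.map (· + (s + t)) μ := by
  rw [Measure.map_map (by fun_prop) (by fun_prop)]
  congr 1
  ext x
  simp [add_assoc]

lemma eq_sum_range_translate_add {μ ν : Measure ℝ} {h : ℝ}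
    (hν : μ = ν + Measure.map (· + h) μ) (n : ℕ) :
    μ = ∑ k ∈ Finset.range n, Measure.map (· + (k : ℝ) * h) ν
      + Measure.map (· + (n : ℝ) * h) μ := by
  induction n with
  | zero => simp
  | succ n ih =>
    have step : Measure.map (· + (n : ℝ) * h) μ = Measure.map (· + (n : ℝ) * h) ν
        + Measure.map (· + ((n + 1 : ℕ) : ℝ) * h) μ := by
      conv_lhs => rw [hν]
      rw [Measure.map_add _ _ (by fun_prop), map_add_map_add]
      congr 3
      ext x
      push_cast
      ring
    rw [Finset.sum_range_succ, add_assoc, ← step]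
    exact ih

lemma tendsto_measure_Iio_sub_natCast_mul {μ : Measure ℝ} (hμ : ∀ x : ℝ, μ (Set.Iio x) < ⊤)
    {h : ℝ} (hh : 0 < h) (b : ℝ) :
    Filter.Tendsto (fun n : ℕ => μ (Set.Iio (b - n * h))) Filter.atTop (nhds 0) := by
  have hanti : Antitone (fun n : ℕ => Set.Iio (b - n * h)) := by
    intro m n hmn
    refine Set.Iio_subset_Iio ?_
    have : (m : ℝ) ≤ n := by exact_mod_cast hmn
    gcongr
  have hempty : ⋂ n : ℕ, Set.Iio (b - n * h) = ∅ := by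
    refine Set.eq_empty_of_forall_notMem fun x hx => ?_
    obtain ⟨n, hn⟩ := exists_nat_gt ((b - x) / h)
    rw [div_lt_iff₀ hh] at hn
    have := Set.mem_iInter.1 hx n
    rw [Set.mem_Iio] at this
    linarith
  have key := tendsto_measure_iInter_atTop (μ := μ)
    (fun n : ℕ => (measurableSet_Iio (a := b - n * h)).nullMeasurableSet) hanti
    ⟨0, (hμ _).ne⟩
  rw [hempty, measure_empty] at key
  exact key

/-- Proposition 4.2, part 1: if `μ ∈ 𝓜(ℝ)`, `h > 0` and `τ_h μ ≤ μ`, then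
there is `ν ∈ 𝓜(ℝ)` with `μ = ν + τ_h μ` and `μ = 𝒥_h ν = ∑_{k∈ℕ} τ_{k·h} ν`. -/
theorem exists_measure_of_translate_le (μ : Measure ℝ)
    (hμ : ∀ x : ℝ, μ (Set.Iio x) < ⊤) (h : ℝ) (hh : 0 < h)
    (hle : Measure.map (· + h) μ ≤ μ) :
    ∃ ν : Measure ℝ, (∀ x : ℝ, ν (Set.Iio x) < ⊤) ∧
      μ = ν + Measure.map (· + h) μ ∧
      μ = Measure.sum (fun k : ℕ => Measure.map (· + (k : ℝ) * h) ν) := by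
  have : IsLocallyFiniteMeasure μ :=
    ⟨fun x => ⟨Set.Iio (x + 1), Iio_mem_nhds (by linarith), hμ _⟩⟩
  obtain ⟨ν, hν⟩ := exists_add_eq_of_le_of_sigmaFinite hle
  have hνμ : ν ≤ μ := by
    conv_rhs => rw [hν]
    exact Measure.le_add_right le_rfl
  refine ⟨ν, fun x => (hνμ _).trans_lt (hμ x), hν, Measure.ext_of_Ico _ _ fun a b _ => ?_⟩
  have hrem : Filter.Tendsto
      (fun n : ℕ => Measure.map (· + (n : ℝ) * h) μ (Set.Ico a b)) Filter.atTop (nhds 0) := by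
    refine tendsto_of_tendsto_of_tendsto_of_le_of_le tendsto_const_nhds
      (tendsto_measure_Iio_sub_natCast_mul hμ hh b) (fun _ => zero_le) fun n => ?_
    simp only
    rw [Measure.map_apply (by fun_prop) measurableSet_Ico]
    refine measure_mono fun x hx => ?_
    have := hx.2
    rw [Set.mem_Iio]
    linarith
  rw [Measure.sum_apply _ measurableSet_Ico]
  have hsum := (ENNReal.summable
    (f := fun k : ℕ => Measure.map (· + (k : ℝ) * h) ν (Set.Ico a b))).hasSum.tendsto_sum_nat
  have hlim := hsum.add hrem
  rw [add_zero] at hlim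
  refine tendsto_nhds_unique (tendsto_const_nhds.congr fun n => ?_) hlim
  conv_lhs => rw [eq_sum_range_translate_add hν n]
  simp
end

section
/- (Proposition 4.3 (a)) Let h₁,…,h_m > 0 and let ν be a Borel measure on ℝ that is finite on every interval (−∞, x). Define μ = 𝒥_{h₁}⋯𝒥_{h_m} ν, i.e. μ = ∑_{(j₁,…,j_m)∈ℕ^m} τ_{j₁h₁+⋯+j_mh_m} ν, and assume μ((−∞, x)) < ∞ for every x ∈ ℝ. Then for every Borel set B ⊆ ℝ that is bounded above, ∑_{S ⊆ {1,…,m}} (−1)^{|S|} μ(B − ∑_{i∈S} h_i) = ν(B). -/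
open MeasureTheory Finset

/-!
Write `a j = ν (B - ∑ i, j i * h i)` for `j : Fin m → ℕ`. Since `B` is bounded above, `μ B < ∞`,
so `a` is summable with sum `μ B`. For `S ⊆ {1, …, m}`, translating by `∑ i ∈ S, h i` shifts the
index by the indicator `1_S`, so `μ (B - ∑ i ∈ S, h i) = ∑' j, a (j + 1_S)`, which is the sum of
`a` over those `j` with `S ⊆ supp j`. Exchanging the two sums, `a j` gets the coefficient
`∑_{S ⊆ supp j} (-1)^|S|`, which is `1` if `j = 0` and `0` otherwise. Only `a 0 = ν B` survives.
-/

/-- Summing a shifted family is summing the original one over the image of the shift. -/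
lemma tsum_shift_eq_tsum_ite {m : ℕ} (a : (Fin m → ℕ) → ℝ) (S : Finset (Fin m)) :
    ∑' j : Fin m → ℕ, a (fun i => j i + if i ∈ S then 1 else 0)
      = ∑' j : Fin m → ℕ, if S ⊆ univ.filter (fun i => j i ≠ 0) then a j else 0 := by
  have hinj : Function.Injective
      (fun (j : Fin m → ℕ) (i : Fin m) => j i + if i ∈ S then 1 else 0) := by
    intro j k hjk
    funext i
    exact Nat.add_right_cancel (congrFun hjk i)
  rw [← hinj.tsum_eq
    (f := fun j => if S ⊆ univ.filter (fun i => j i ≠ 0) then a j else 0)]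
  · refine tsum_congr fun j => ?_
    rw [if_pos]
    intro i hi
    simp [hi]
  · intro j hj
    have hS : S ⊆ univ.filter (fun i => j i ≠ 0) := by
      by_contra hc
      exact hj (if_neg hc)
    refine ⟨fun i => j i - if i ∈ S then 1 else 0, ?_⟩
    funext i
    by_cases hi : i ∈ S
    · have hne : j i ≠ 0 := by simpa using hS hi
      simp only [hi, if_true]
      omega
    · simp [hi]

/-- The combinatorial core: the alternating sum of the shifted sums of a summable family on `ℕ^m`
isolates its value at the origin. -/
lemma sum_neg_one_pow_card_mul_tsum_shift {m : ℕ} (a : (Fin m → ℕ) → ℝ) (ha : Summable a) :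
    ∑ S : Finset (Fin m), (-1 : ℝ) ^ S.card *
      ∑' j : Fin m → ℕ, a (fun i => j i + if i ∈ S then 1 else 0) = a 0 := by
  simp_rw [tsum_shift_eq_tsum_ite, ← tsum_mul_left]
  rw [← Summable.tsum_finsetSum]
  · rw [tsum_eq_single (0 : Fin m → ℕ)]
    · simp [Finset.subset_empty]
    · intro j hj
      have hne : (univ.filter (fun i => j i ≠ 0)).Nonempty := by
        obtain ⟨i, hi⟩ := Function.ne_iff.mp hj
        exact ⟨i, by simpa using hi⟩
      have hz : ∑ S ∈ (univ.filter (fun i => j i ≠ 0)).powerset, (-1 : ℝ) ^ S.card = 0 := by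
        exact_mod_cast Finset.sum_powerset_neg_one_pow_card_of_nonempty hne
      have hfilter : (univ.filter fun S : Finset (Fin m) => S ⊆ univ.filter (fun i => j i ≠ 0))
          = (univ.filter (fun i => j i ≠ 0)).powerset := by
        ext S
        simp only [mem_filter, mem_univ, true_and, mem_powerset]
      simp_rw [mul_ite, mul_zero]
      rw [← Finset.sum_filter, hfilter, ← Finset.sum_mul, hz, zero_mul]
  · intro S _
    refine Summable.mul_left _ ?_
    exact ha.indicator {j | S ⊆ univ.filter (fun i => j i ≠ 0)} |>.congr fun j => by
      simp only [Set.indicator_apply, Set.mem_ofPred_eq]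

/-- Proposition 4.3 (a): with `μ = 𝒥_{h₁}⋯𝒥_{h_m} ν`, i.e.
`μ = ∑_{(j₁,…,j_m)∈ℕ^m} τ_{j₁h₁+⋯+j_mh_m} ν`, assumed to lie in `𝓜(ℝ)`, the iterated
backward difference of `μ` recovers `ν`: for every Borel set `B` bounded above,
`∑_{S⊆{1,…,m}} (−1)^{|S|} μ(B − ∑_{i∈S} hᵢ) = ν(B)`. -/
theorem backward_difference_recovers_measure (m : ℕ) (h : Fin m → ℝ)
    (hpos : ∀ i, 0 < h i) (ν : Measure ℝ) (hν : ∀ x : ℝ, ν (Set.Iio x) < ⊤)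
    (μ : Measure ℝ)
    (hμdef : μ = Measure.sum
      (fun j : Fin m → ℕ => Measure.map (· + ∑ i, (j i : ℝ) * h i) ν))
    (hμ : ∀ x : ℝ, μ (Set.Iio x) < ⊤)
    (B : Set ℝ) (hB : MeasurableSet B) (hBdd : BddAbove B) :
    ∑ S : Finset (Fin m), (-1 : ℝ) ^ S.card * (μ ((· + ∑ i ∈ S, h i) ⁻¹' B)).toReal
      = (ν B).toReal := by
  have hμB : μ B < ⊤ := by
    obtain ⟨b, hb⟩ := hBdd
    refine lt_of_le_of_lt (measure_mono fun x hx => ?_) (hμ (b + 1))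
    exact lt_of_le_of_lt (hb hx) (lt_add_one b)
  set e : (Fin m → ℕ) → ENNReal :=
    fun j => ν ((· + ∑ i, (j i : ℝ) * h i) ⁻¹' B) with he
  have hshift : ∀ S : Finset (Fin m), μ ((· + ∑ i ∈ S, h i) ⁻¹' B)
      = ∑' j : Fin m → ℕ, e (fun i => j i + if i ∈ S then 1 else 0) := by
    intro S
    have hBS : MeasurableSet ((· + ∑ i ∈ S, h i) ⁻¹' B) := measurable_add_const _ hB
    rw [hμdef, Measure.sum_apply _ hBS]
    refine tsum_congr fun j => ?_
    rw [Measure.map_apply (measurable_add_const _) hBS, he]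
    have hsum : ∑ i, ((j i + if i ∈ S then 1 else 0 : ℕ) : ℝ) * h i
        = ∑ i, (j i : ℝ) * h i + ∑ i ∈ S, h i := by
      simp [add_mul, Finset.sum_add_distrib]
    simp only [hsum, ← Set.preimage_comp, Function.comp_def, add_assoc]
  have htotal : ∑' j, e j ≠ ⊤ := by
    have h0 := hshift ∅
    simp only [Finset.sum_empty, add_zero, Set.preimage_id', Finset.notMem_empty, if_false] at h0
    rw [← h0]
    exact hμB.ne
  have hfin : ∀ j, e j ≠ ⊤ := ENNReal.ne_top_of_tsum_ne_top htotal
  have hmain := sum_neg_one_pow_card_mul_tsum_shift (fun j => (e j).toReal)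
    (ENNReal.summable_toReal htotal)
  have he0 : e 0 = ν B := by simp [he]
  rw [← he0, ← hmain]
  refine Finset.sum_congr rfl fun S _ => ?_
  rw [hshift S, ENNReal.tsum_toReal_eq fun j => hfin _]
end

section
/- (Lemma 4.4 (c),(d),(e)) Let n ≥ 1, let h₁,…,h_{n+1} be distinct positive real numbers that are linearly independent over ℚ, for i = 1,…,n+1 let μ_i = ∑_{(j₁,…,j_{n+1})∈ℕ^{n+1}} δ_{h_i + j₁h₁+⋯+j_{n+1}h_{n+1}}, and for x ∈ ℝ set μ(x) = ∑_{i=2}^{n+1} μ_i({x}) − μ₁({x}) (a real number). Let A_i = { h_i + ∑_{j≠i} ε_j h_j : ε_j ∈ {0,1} } and A = A₁ ∪ ⋯ ∪ A_{n+1}. Then: μ(h₁) = −1; for every x ∈ A, μ(x) < 0 if and only if x = h₁; and for every x ∈ A, max(μ(x), 0) = μ(x) + δ_{h₁}({x}). -/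
/-!
By linear independence over `ℚ`, a point `x = ∑ mₖ hₖ` with `m ∈ ℕ^{n+1}` determines `m`, so `μᵢ({x})`
counts the `j ∈ ℕ^{n+1}` with `eᵢ + j = m`: it is `1` if `mᵢ ≥ 1` and `0` otherwise
(`sum_dirac_singleton`). Hence `μ(x) = #{i ≠ 1 : mᵢ ≥ 1} - [m₁ ≥ 1]`, which is negative only if
`m` is a positive multiple of `e₁`. Points of `A` have all `mₖ ∈ {0, 1}`, so for them this means
`m = e₁`, that is `x = h₁`, where `μ` equals `-1`. (In the code, the index `1` is `0 : Fin (n + 1)`.)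
-/

open MeasureTheory Finset

lemma natCombo_injective {ι : Type*} [Fintype ι] {h : ι → ℝ} (hli : LinearIndependent ℚ h)
    {a b : ι → ℕ} (hab : ∑ k, (a k : ℝ) * h k = ∑ k, (b k : ℝ) * h k) : a = b := by
  have key := Fintype.linearIndependent_iff.1 hli (fun k => (a k : ℚ) - b k) (by
    simp only [Rat.smul_def]
    push_cast
    simp only [sub_mul, Finset.sum_sub_distrib, hab, sub_self])
  funext k
  have := key k
  exact_mod_cast sub_eq_zero.1 this

lemma natCombo_single {ι : Type*} [Fintype ι] [DecidableEq ι] (h : ι → ℝ) (i : ι) :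
    ∑ k, ((Pi.single i 1 : ι → ℕ) k : ℝ) * h k = h i := by
  simp [Pi.single_apply]

lemma natCombo_single_add {ι : Type*} [Fintype ι] [DecidableEq ι] (h : ι → ℝ) (i : ι)
    (j : ι → ℕ) :
    ∑ k, ((Pi.single i 1 + j : ι → ℕ) k : ℝ) * h k = h i + ∑ k, (j k : ℝ) * h k := by
  rw [← natCombo_single h i, ← Finset.sum_add_distrib]
  refine Finset.sum_congr rfl fun k _ => ?_
  rw [Pi.add_apply, Nat.cast_add, add_mul]

/-- The measure `μᵢ` gives mass `1` or `0` to `∑ mₖ hₖ`, since at most one index,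
`j = m - eᵢ`, contributes. -/
lemma sum_dirac_singleton {ι : Type*} [Fintype ι] {h : ι → ℝ}
    (hli : LinearIndependent ℚ h) (i : ι) (m : ι → ℕ) :
    (Measure.sum (fun j : ι → ℕ => Measure.dirac (h i + ∑ k, (j k : ℝ) * h k)))
      {∑ k, (m k : ℝ) * h k} = if 1 ≤ m i then 1 else 0 := by
  classical
  rw [Measure.sum_apply _ (measurableSet_singleton _)]
  have hiff : ∀ j : ι → ℕ, h i + ∑ k, (j k : ℝ) * h k = ∑ k, (m k : ℝ) * h k ↔
      Pi.single i 1 + j = m := fun j => by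
    rw [← natCombo_single_add]
    exact ⟨fun e => natCombo_injective hli e, fun e => by rw [e]⟩
  simp only [Measure.dirac_apply' _ (measurableSet_singleton _), Set.indicator_apply,
    Set.mem_singleton_iff, hiff, Pi.one_apply]
  split_ifs with hm
  · have hle : Pi.single i 1 ≤ m := fun k => by
      by_cases hk : k = i
      · subst hk; simpa using hm
      · simp [hk]
    rw [tsum_eq_single (m - Pi.single i 1)]
    · rw [if_pos (add_tsub_cancel_of_le hle)]
    · intro j hj
      rw [if_neg]
      rintro rfl
      exact hj (by simp)
  · refine ENNReal.tsum_eq_zero.2 fun j => if_neg ?_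
    rintro rfl
    simp at hm

/-- Lemma 4.4 (c),(d),(e): with
`μᵢ = ∑_{(j₁,…,j_{n+1})∈ℕ^{n+1}} δ_{hᵢ + j₁h₁+⋯+j_{n+1}h_{n+1}}`,
`μ(x) = ∑_{i=2}^{n+1} μᵢ({x}) − μ₁({x})`, `Aᵢ = {hᵢ + ∑_{j≠i} εⱼhⱼ : εⱼ ∈ {0,1}}` and
`A = A₁ ∪ ⋯ ∪ A_{n+1}`: `μ(h₁) = −1`; for `x ∈ A`, `μ(x) < 0 ↔ x = h₁`; and for `x ∈ A`,
`max(μ(x),0) = μ(x) + δ_{h₁}({x})`. -/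
theorem mu_signed_on_A (n : ℕ) (hn : 1 ≤ n) (h : Fin (n + 1) → ℝ)
    (hdist : Function.Injective h) (hpos : ∀ i, 0 < h i)
    (hli : LinearIndependent ℚ h)
    (μm : Fin (n + 1) → Measure ℝ)
    (hμm : ∀ i, μm i = Measure.sum (fun j : Fin (n + 1) → ℕ =>
      Measure.dirac (h i + ∑ k, (j k : ℝ) * h k)))
    (μr : ℝ → ℝ)
    (hμr : ∀ x : ℝ, μr x =
      (∑ i ∈ Finset.univ.erase (0 : Fin (n + 1)), (μm i {x}).toReal) - (μm 0 {x}).toReal)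
    (A : Fin (n + 1) → Set ℝ)
    (hA : ∀ i, A i = {y : ℝ | ∃ ε : Fin (n + 1) → Bool,
      y = h i + ∑ j ∈ Finset.univ.erase i, (if ε j then h j else 0)}) :
    μr (h 0) = -1 ∧
      (∀ x ∈ ⋃ k, A k, (μr x < 0 ↔ x = h 0)) ∧
      (∀ x ∈ ⋃ k, A k,
        max (μr x) 0 = μr x + (Measure.dirac (h 0) {x}).toReal) := by
  have hval : ∀ m : Fin (n + 1) → ℕ, μr (∑ k, (m k : ℝ) * h k) =
      (∑ i ∈ Finset.univ.erase (0 : Fin (n + 1)), if 1 ≤ m i then (1 : ℝ) else 0)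
        - if 1 ≤ m 0 then 1 else 0 := fun m => by
    rw [hμr]
    simp only [hμm, sum_dirac_singleton hli, apply_ite ENNReal.toReal, ENNReal.toReal_one,
      ENNReal.toReal_zero]
  have h0 : μr (h 0) = -1 := by
    rw [← natCombo_single h 0, hval, Finset.sum_eq_zero]
    · simp
    · intro i hi
      simp [Finset.ne_of_mem_erase hi]
  have hdich : ∀ x ∈ ⋃ k, A k, x ≠ h 0 → 0 ≤ μr x := by
    intro x hx hne
    obtain ⟨i, hi⟩ := Set.mem_iUnion.1 hx
    rw [hA] at hi
    obtain ⟨ε, hε⟩ := hi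
    obtain ⟨m, hm1, rfl⟩ : ∃ m : Fin (n + 1) → ℕ, (∀ k, m k ≤ 1) ∧
        x = ∑ k, (m k : ℝ) * h k := by
      refine ⟨fun k => if k = i ∨ ε k = true then 1 else 0, fun k => by
        dsimp only; split_ifs <;> simp, ?_⟩
      rw [hε, ← Finset.add_sum_erase _ _ (Finset.mem_univ i)]
      congr 1
      · simp
      · refine Finset.sum_congr rfl fun j hj => ?_
        simp [Finset.ne_of_mem_erase hj]
    have hnn : ∀ i ∈ Finset.univ.erase (0 : Fin (n + 1)),
        (0 : ℝ) ≤ if 1 ≤ m i then (1 : ℝ) else 0 := fun i _ => by split_ifs <;> simp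
    rw [hval]
    by_cases hm0 : 1 ≤ m 0
    · -- As `m ≠ e₀`, some other coordinate is positive and compensates for the `-1`.
      obtain ⟨j, hj0, hj⟩ : ∃ j, j ≠ 0 ∧ 1 ≤ m j := by
        by_contra! hcon
        apply hne
        have hm : m = Pi.single 0 1 := by
          funext k
          by_cases hk : k = 0
          · subst hk; simpa using le_antisymm (hm1 0) hm0
          · have := hcon k hk
            simp [hk]; omega
        rw [hm, natCombo_single]
      have := Finset.single_le_sum hnn (Finset.mem_erase.2 ⟨hj0, Finset.mem_univ j⟩)
      rw [if_pos hj] at this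
      rw [if_pos hm0]
      linarith
    · rw [if_neg hm0, sub_zero]
      exact Finset.sum_nonneg hnn
  refine ⟨h0, fun x hx => ⟨fun hlt => ?_, fun e => ?_⟩, fun x hx => ?_⟩
  · by_contra hne
    exact absurd (hdich x hx hne) (not_le.2 hlt)
  · rw [e, h0]; norm_num
  · by_cases hne : x = h 0
    · subst hne
      rw [h0]
      simp
    · rw [max_eq_left (hdich x hx hne)]
      simp [Ne.symm hne]
end

section
/- (Lemma 4.6, formulas (4.11)–(4.13)) Let n ≥ 1, let h₁,…,h_{n+1} be distinct positive real numbers that are linearly independent over ℚ, for i = 1,…,n+1 let μ_i = ∑_{(j₁,…,j_{n+1})∈ℕ^{n+1}} δ_{h_i + j₁h₁+⋯+j_{n+1}h_{n+1}}, and for y ∈ ℝ set μ(y) = ∑_{i=2}^{n+1} μ_i({y}) − μ₁({y}). Let A_i = { h_i + ∑_{j≠i} ε_j h_j : ε_j ∈ {0,1} }, A = A₁ ∪ ⋯ ∪ A_{n+1}, and x̄ = h₁ + ⋯ + h_{n+1}. Then: (i) for every x ∈ A, (μ(x) + δ_{h₁}({x}))ⁿ = μ(x)ⁿ − (−1)ⁿ·δ_{h₁}({x});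 (ii) ∑_{S ⊆ {1,…,n+1}} (−1)^{|S|} (μ(x̄ − ∑_{i∈S} h_i))ⁿ = 0; (iii) ∑_{S ⊆ {1,…,n+1}} (−1)^{|S|} δ_{h₁}({x̄ − ∑_{i∈S} h_i}) = (−1)ⁿ. -/
/-!
Every point at which `μ` is evaluated is a subset sum `x_T = ∑_{k ∈ T} h_k`. By linear
independence over `ℚ`, `x_T` is the support point of exactly one of the Dirac masses of `μ_i` if
`i ∈ T` and of none otherwise (`measure_subset_sum`), so `μ(x_T) = ∑_{k ∈ T} c_k` with `c_0 = -1`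
and `c_k = 1` for `k ≠ 0`; also `x_T = h_0` iff `T = {0}`.

(i) is trivial unless `x = h_0`, where `μ(x) = -1` and both sides vanish. In (ii), `μ(x_T)ⁿ` is a
polynomial of degree `n` in an additive function of `T`, hence killed by `n + 1` differences
(`alternating_sum_pow`). In (iii) only `S = univ \ {0}`, of cardinality `n`, contributes.
-/

open MeasureTheory Finset

/-- An iterated difference of order `#s` kills the monomial of degree `m < #s`. -/
lemma alternating_sum_pow {ι : Type*} [DecidableEq ι] (c : ι → ℝ) (s : Finset ι) :
    ∀ m < s.card, ∀ a : ℝ,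
      ∑ S ∈ s.powerset, (-1 : ℝ) ^ S.card * (a - ∑ i ∈ S, c i) ^ m = 0 := by
  induction s using Finset.induction_on with
  | empty => intro m hm; simp at hm
  | insert i s his ih =>
    intro m hm a
    rw [Finset.card_insert_of_notMem his] at hm
    rw [Finset.sum_powerset_insert his, ← Finset.sum_add_distrib]
    -- The top-degree terms of `b ^ m - (b - c i) ^ m` cancel, leaving powers `b ^ k`, `k < m`.
    have key : ∀ S ∈ s.powerset,
        (-1 : ℝ) ^ S.card * (a - ∑ i ∈ S, c i) ^ m +
          (-1 : ℝ) ^ (insert i S).card * (a - ∑ i ∈ insert i S, c i) ^ m =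
        ∑ k ∈ Finset.range m, (-((-c i) ^ (m - k) * (m.choose k : ℝ))) *
          ((-1 : ℝ) ^ S.card * (a - ∑ i ∈ S, c i) ^ k) := by
      intro S hS
      have hiS : i ∉ S := fun hi => his (Finset.mem_powerset.mp hS hi)
      rw [Finset.card_insert_of_notMem hiS, Finset.sum_insert hiS,
        show a - (c i + ∑ i ∈ S, c i) = (a - ∑ i ∈ S, c i) + (-c i) by ring,
        add_pow, Finset.sum_range_succ, mul_add, pow_succ, Finset.mul_sum]
      simp only [Nat.sub_self, pow_zero, Nat.choose_self, Nat.cast_one, mul_one]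
      rw [add_comm, add_assoc, ← sub_eq_zero, add_sub_assoc, add_comm]
      rw [show ∀ x y z w : ℝ, x + y - z + w = (w - z) + (x + y) by intros; ring,
        ← Finset.sum_sub_distrib]
      rw [Finset.sum_eq_zero (fun k _ => by ring)]
      ring
    rw [Finset.sum_congr rfl key, Finset.sum_comm]
    refine Finset.sum_eq_zero fun k hk => ?_
    rw [← Finset.mul_sum, ih k (by have := Finset.mem_range.mp hk; omega) a, mul_zero]

lemma coeff_ext {ι : Type*} [Fintype ι] {h : ι → ℝ} (hli : LinearIndependent ℚ h)
    {f g : ι → ℕ} (hfg : ∑ k, (f k : ℝ) * h k = ∑ k, (g k : ℝ) * h k) : f = g := by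
  have h0 := Fintype.linearIndependent_iff.mp hli (fun k => (f k : ℚ) - g k) (by
    simp only [Rat.smul_def]
    push_cast
    simp only [sub_mul, Finset.sum_sub_distrib, hfg, sub_self])
  funext k
  have := h0 k
  exact_mod_cast sub_eq_zero.mp this

lemma subset_sum_eq {ι : Type*} [Fintype ι] [DecidableEq ι] (h : ι → ℝ) (T : Finset ι) :
    ∑ k ∈ T, h k = ∑ k, ((if k ∈ T then 1 else 0 : ℕ) : ℝ) * h k := by
  simp

lemma subset_sum_eq_single_iff {ι : Type*} [Fintype ι] [DecidableEq ι] {h : ι → ℝ}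
    (hli : LinearIndependent ℚ h) (T : Finset ι) (i : ι) :
    h i = ∑ k ∈ T, h k ↔ T = {i} := by
  constructor
  · intro e
    have e' : ∑ k ∈ {i}, h k = ∑ k ∈ T, h k := by simpa using e
    rw [subset_sum_eq h, subset_sum_eq h T] at e'
    have := coeff_ext hli e'
    ext k
    have hk := congrFun this k
    by_cases h1 : k ∈ T <;> by_cases h2 : k ∈ ({i} : Finset ι) <;> simp_all
  · rintro rfl
    simp

/-- The atom of `μ_i` at a subset sum over `T`: it is hit by the multi-index `j` precisely when
`e_i + j` is the indicator vector of `T`, which has a unique solution if `i ∈ T` and none if not. -/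
lemma measure_subset_sum {ι : Type*} [Fintype ι] [DecidableEq ι] {h : ι → ℝ}
    (hli : LinearIndependent ℚ h) (T : Finset ι) (i : ι) :
    (Measure.sum (fun j : ι → ℕ => Measure.dirac (h i + ∑ k, (j k : ℝ) * h k))
      {∑ k ∈ T, h k}).toReal = if i ∈ T then 1 else 0 := by
  have hiff : ∀ j : ι → ℕ, h i + ∑ k, (j k : ℝ) * h k = ∑ k ∈ T, h k ↔
      ∀ k, (if k = i then 1 else 0) + j k = if k ∈ T then 1 else 0 := by
    intro j
    have e : h i + ∑ k, (j k : ℝ) * h k =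
        ∑ k, (((if k = i then 1 else 0) + j k : ℕ) : ℝ) * h k := by
      simp [add_mul, Finset.sum_add_distrib]
    rw [e, subset_sum_eq h T]
    constructor
    · intro e k
      exact congrFun (coeff_ext hli e) k
    · intro e
      exact Finset.sum_congr rfl fun k _ => by rw [e k]
  rw [Measure.sum_apply _ (measurableSet_singleton _)]
  simp only [Measure.dirac_apply, Set.indicator_apply, Set.mem_singleton_iff, Pi.one_apply, hiff]
  split_ifs with hi
  · rw [tsum_eq_single (fun k => if k ∈ T.erase i then 1 else 0)]
    · rw [if_pos]
      · simp
      · intro k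
        by_cases hk : k = i <;> simp [hk, hi]
    · intro j hj
      rw [if_neg]
      intro hall
      apply hj
      funext k
      have := hall k
      by_cases hk : k = i
      · subst hk; simp [hi] at this ⊢; exact this
      · simpa [hk] using this
  · have : ∀ j : ι → ℕ, ¬ ∀ k, (if k = i then 1 else 0) + j k = if k ∈ T then 1 else 0 := by
      intro j hall
      have := hall i
      simp [hi] at this
    simp [this]

/-- Lemma 4.6, formulas (4.11)–(4.13): with the measures `μᵢ`, the signed
point function `μ(y) = ∑_{i=2}^{n+1} μᵢ({y}) − μ₁({y})`, `A = A₁ ∪ ⋯ ∪ A_{n+1}` and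
`x̄ = h₁ + ⋯ + h_{n+1}`:
(i) `(μ(x) + δ_{h₁}({x}))ⁿ = μ(x)ⁿ − (−1)ⁿ δ_{h₁}({x})` for `x ∈ A`;
(ii) `∑_{S⊆{1,…,n+1}} (−1)^{|S|} (μ(x̄ − ∑_{i∈S} hᵢ))ⁿ = 0`;
(iii) `∑_{S⊆{1,…,n+1}} (−1)^{|S|} δ_{h₁}({x̄ − ∑_{i∈S} hᵢ}) = (−1)ⁿ`. -/
theorem lemma_four_six (n : ℕ) (hn : 1 ≤ n) (h : Fin (n + 1) → ℝ)
    (hdist : Function.Injective h) (hpos : ∀ i, 0 < h i)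
    (hli : LinearIndependent ℚ h)
    (μm : Fin (n + 1) → Measure ℝ)
    (hμm : ∀ i, μm i = Measure.sum (fun j : Fin (n + 1) → ℕ =>
      Measure.dirac (h i + ∑ k, (j k : ℝ) * h k)))
    (μr : ℝ → ℝ)
    (hμr : ∀ y : ℝ, μr y =
      (∑ i ∈ Finset.univ.erase (0 : Fin (n + 1)), (μm i {y}).toReal) - (μm 0 {y}).toReal)
    (A : Fin (n + 1) → Set ℝ)
    (hA : ∀ i, A i = {y : ℝ | ∃ ε : Fin (n + 1) → Bool,
      y = h i + ∑ j ∈ Finset.univ.erase i, (if ε j then h j else 0)}) :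
    (∀ x ∈ ⋃ k, A k,
        (μr x + (Measure.dirac (h 0) {x}).toReal) ^ n
          = (μr x) ^ n - (-1 : ℝ) ^ n * (Measure.dirac (h 0) {x}).toReal) ∧
      (∑ S : Finset (Fin (n + 1)),
          (-1 : ℝ) ^ S.card * (μr ((∑ i, h i) - ∑ i ∈ S, h i)) ^ n = 0) ∧
      (∑ S : Finset (Fin (n + 1)),
          (-1 : ℝ) ^ S.card *
            (Measure.dirac (h 0) {(∑ i, h i) - ∑ i ∈ S, h i}).toReal = (-1 : ℝ) ^ n) := by
  -- `μ` is additive in `T` on subset sums, with weight `-1` at `0` and `1` elsewhere.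
  have hμ : ∀ T : Finset (Fin (n + 1)),
      μr (∑ k ∈ T, h k) = ∑ k ∈ T, (if k = 0 then (-1 : ℝ) else 1) := by
    intro T
    rw [hμr]
    simp only [hμm, measure_subset_sum hli]
    have e : ∑ k ∈ T, (if k = 0 then (-1 : ℝ) else 1) =
        ∑ k, if k ∈ T then (if k = 0 then (-1 : ℝ) else 1) else 0 := by simp
    rw [e, ← Finset.add_sum_erase _ _ (Finset.mem_univ (0 : Fin (n + 1)))]
    rw [Finset.sum_congr rfl (g := fun k => if k ∈ T then (if k = 0 then (-1 : ℝ) else 1) else 0)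
      (fun k hk => by simp [Finset.ne_of_mem_erase hk])]
    by_cases h0 : (0 : Fin (n + 1)) ∈ T
    · simp only [h0, if_true]; ring
    · simp only [h0, if_false]; ring
  have hδ : ∀ T : Finset (Fin (n + 1)),
      (Measure.dirac (h 0) {∑ k ∈ T, h k}).toReal = if T = {0} then (1 : ℝ) else 0 := by
    intro T
    rw [Measure.dirac_apply]
    simp only [Set.indicator_apply, Set.mem_singleton_iff, subset_sum_eq_single_iff hli,
      Pi.one_apply]
    split_ifs <;> simp
  have hcompl : ∀ S : Finset (Fin (n + 1)), (∑ i, h i) - ∑ i ∈ S, h i = ∑ i ∈ Sᶜ, h i := by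
    intro S
    rw [← Finset.sum_add_sum_compl S h]
    ring
  refine ⟨?_, ?_, ?_⟩
  · intro x hx
    obtain ⟨i, hi⟩ := Set.mem_iUnion.mp hx
    rw [hA] at hi
    obtain ⟨ε, rfl⟩ := hi
    have e : h i + ∑ j ∈ Finset.univ.erase i, (if ε j then h j else 0) =
        ∑ k ∈ insert i ((Finset.univ.erase i).filter fun j => ε j = true), h k := by
      rw [Finset.sum_insert (by simp), Finset.sum_filter]
    rw [e, hμ, hδ]
    split_ifs with hT
    · rw [hT]
      simp [show n ≠ 0 by omega]
    · simp
  · have hs := alternating_sum_pow (fun k : Fin (n + 1) => if k = 0 then (-1 : ℝ) else 1)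
      Finset.univ n (by simp) (∑ k : Fin (n + 1), if k = 0 then (-1 : ℝ) else 1)
    rw [Finset.powerset_univ] at hs
    rw [← hs]
    refine Finset.sum_congr rfl fun S _ => ?_
    rw [hcompl, hμ, ← Finset.sum_add_sum_compl S, add_sub_cancel_left]
  · simp only [hcompl, hδ]
    rw [Finset.sum_eq_single ({0}ᶜ : Finset (Fin (n + 1)))]
    · simp [Finset.card_compl]
    · intro S _ hS
      rw [if_neg, mul_zero]
      intro e
      exact hS (by rw [← e, compl_compl])
    · simp
end
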